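/- arXiv:2512.16486 — 2 statements merged into one kernel-verified Lean document; each statement's English description precedes it below -/
import Mathlib

section
/- Classical comparison inequalities. Let (V, E, ends, α) be a finite graph with boundary condition, p ∈ (0,1) and q > 0. Then P_{min(p,p')} ≼ φ^α_{G,p,q} ≼ P_{max(p,p')}, where p' = p/(p+q(1−p)). -/
open scoped Classical

noncomputable section

namespace FKPaper

variable {V E : Type*}

/-- One-step adjacency between wired vertices through an edge in `F`. -/
def Step (ends : E → Sym2 V) (α : Setoid V) (F : Set E) (x y : Quotient α) : Prop :=
  ∃ e ∈ F, Sym2.map (Quotient.mk α) (ends e) = s(x, y)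

/-- Setoid of connected components of the wired multigraph with edge set `F`. -/
def connSetoid (ends : E → Sym2 V) (α : Setoid V) (F : Set E) : Setoid (Quotient α) :=
  Relation.EqvGen.setoid (Step ends α F)

/-- Connectivity in the wired multigraph with edge set `F`. -/
def Conn (ends : E → Sym2 V) (α : Setoid V) (F : Set E) (x y : Quotient α) : Prop :=
  (connSetoid ends α F).r x y

/-- The two endpoints of `e` are joined in the wired multigraph with edge set `F`. -/
def EndsConn (ends : E → Sym2 V) (α : Setoid V) (F : Set E) (e : E) : Prop :=
  ∀ x y : V, ends e = s(x, y) → Conn ends α F (Quotient.mk α x) (Quotient.mk α y)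

/-- Number of connected components `k(ω, α)`. -/
def numComponents (ends : E → Sym2 V) (α : Setoid V) (ω : E → Bool) : ℕ :=
  Nat.card (Quotient (connSetoid ends α {e | ω e = true}))

/-- `p' = p / (p + q (1 - p))`. -/
def pPrime (p q : ℝ) : ℝ := p / (p + q * (1 - p))

/-- Total mass of a set under a weight function. -/
def massOf {ι : Type*} [Fintype ι] (w : ι → ℝ) (A : Set ι) : ℝ :=
  ∑ x ∈ Finset.univ.filter (· ∈ A), w x

/-- Normalized probability of a set under a weight function. -/
def probOf {ι : Type*} [Fintype ι] (w : ι → ℝ) (A : Set ι) : ℝ :=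
  massOf w A / massOf w Set.univ

/-- FK weight of a configuration. -/
def fkWeight [Fintype E] (ends : E → Sym2 V) (α : Setoid V) (p q : ℝ) (ω : E → Bool) : ℝ :=
  p ^ (Finset.univ.filter fun e => ω e = true).card *
    (1 - p) ^ (Finset.univ.filter fun e => ω e = false).card *
    q ^ numComponents ends α ω

/-- The FK (random cluster) probability measure `φ^α_{G,p,q}`. -/
def fkProb [Fintype E] (ends : E → Sym2 V) (α : Setoid V) (p q : ℝ)
    (A : Set (E → Bool)) : ℝ :=
  probOf (fkWeight ends α p q) A

/-- Inhomogeneous Bernoulli weight. -/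
def berWeight [Fintype E] (pe : E → ℝ) (ω : E → Bool) : ℝ :=
  ∏ e, if ω e = true then pe e else 1 - pe e

/-- Inhomogeneous Bernoulli product measure `P_{(p_e)}`. -/
def berProb [Fintype E] (pe : E → ℝ) (A : Set (E → Bool)) : ℝ :=
  probOf (berWeight pe) A

/-- Increasing sets of configurations. -/
def Increasing (A : Set (E → Bool)) : Prop :=
  ∀ ⦃ω ω' : E → Bool⦄, ω ∈ A → (∀ e, ω e ≤ ω' e) → ω' ∈ A

/-- Stochastic domination `μ ≼ ν`. -/
def StochDom [Fintype E] (μ ν : Set (E → Bool) → ℝ) : Prop :=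
  ∀ A : Set (E → Bool), Increasing A → μ A ≤ ν A

/-- `Q_F(e)`: cutsets for `e` included in `F`. -/
def Cutsets (ends : E → Sym2 V) (α : Setoid V) (F : Set E) (e : E) : Set (Set E) :=
  {χ | χ ⊆ F ∧ ¬ EndsConn ends α {e' | e' ∉ χ ∧ e' ≠ e} e}



theorem conn_insert (ends : E → Sym2 V) (α : Setoid V) (F F' : Set E) (e : E)
    (hF : F' ⊆ insert e F) (x y : Quotient α)
    (hxy : Sym2.map (Quotient.mk α) (ends e) = s(x, y)) (u v : Quotient α)
    (h : Relation.EqvGen (Step ends α F') u v) :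
    (connSetoid ends α F).r u v ∨
      (((connSetoid ends α F).r u x ∨ (connSetoid ends α F).r u y) ∧
       ((connSetoid ends α F).r v x ∨ (connSetoid ends α F).r v y)) := by
  have hs : ∀ {a b}, (connSetoid ends α F).r a b → (connSetoid ends α F).r b a :=
    fun h => (connSetoid ends α F).symm' h
  have ht : ∀ {a b c}, (connSetoid ends α F).r a b → (connSetoid ends α F).r b c →
      (connSetoid ends α F).r a c :=
    fun h h' => (connSetoid ends α F).trans' h h'
  have hr : ∀ a, (connSetoid ends α F).r a a := fun a => (connSetoid ends α F).refl' a
  induction h with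
  | rel a b hab =>
    obtain ⟨e', he', h'⟩ := hab
    rcases hF he' with rfl | he'
    · rw [hxy] at h'
      rcases Sym2.eq_iff.1 h' with ⟨rfl, rfl⟩ | ⟨rfl, rfl⟩
      · exact Or.inr ⟨Or.inl (hr _), Or.inr (hr _)⟩
      · exact Or.inr ⟨Or.inr (hr _), Or.inl (hr _)⟩
    · exact Or.inl (Relation.EqvGen.rel _ _ ⟨e', he', h'⟩)
  | refl a => exact Or.inl (hr a)
  | symm a b _ ih =>
    rcases ih with h | ⟨h1, h2⟩
    · exact Or.inl (hs h)
    · exact Or.inr ⟨h2, h1⟩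
  | trans a b c _ _ ih1 ih2 =>
    rcases ih1 with h | ⟨h1, h2⟩
    · rcases ih2 with h' | ⟨h3, h4⟩
      · exact Or.inl (ht h h')
      · exact Or.inr ⟨h3.imp (ht h) (ht h), h4⟩
    · rcases ih2 with h' | ⟨h3, h4⟩
      · exact Or.inr ⟨h1, h2.imp (ht (hs h')) (ht (hs h'))⟩
      · exact Or.inr ⟨h1, h4⟩

theorem connSetoid_mono (ends : E → Sym2 V) (α : Setoid V) {F F' : Set E}
    (hF : F ⊆ F') {u v : Quotient α} (h : (connSetoid ends α F).r u v) :
    (connSetoid ends α F').r u v := by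
  refine Relation.EqvGen.mono ?_ _ _ h
  rintro a b ⟨e, he, h⟩
  exact ⟨e, hF he, h⟩

theorem card_mono [Finite V] (ends : E → Sym2 V) (α : Setoid V) {F F' : Set E}
    (hF : F ⊆ F') :
    Nat.card (Quotient (connSetoid ends α F')) ≤ Nat.card (Quotient (connSetoid ends α F)) := by
  refine Nat.card_le_card_of_surjective
    (Quotient.map' (s₁ := connSetoid ends α F) (s₂ := connSetoid ends α F') id
      (fun _ _ h => connSetoid_mono ends α hF h)) ?_
  intro c
  induction c using Quotient.inductionOn' with
  | h a => exact ⟨Quotient.mk'' a, rfl⟩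

theorem card_insert [Finite V] (ends : E → Sym2 V) (α : Setoid V) {F F' : Set E} (e : E)
    (hF : F ⊆ F') (hF' : F' ⊆ insert e F) :
    Nat.card (Quotient (connSetoid ends α F)) ≤
      Nat.card (Quotient (connSetoid ends α F')) + 1 := by
  obtain ⟨x, y, hxy⟩ : ∃ x y, Sym2.map (Quotient.mk α) (ends e) = s(x, y) := by
    induction Sym2.map (Quotient.mk α) (ends e) using Sym2.ind with
    | _ x y => exact ⟨x, y, rfl⟩
  let g : Quotient (connSetoid ends α F) → Quotient (connSetoid ends α F') :=
    Quotient.map' (s₁ := connSetoid ends α F) (s₂ := connSetoid ends α F') id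
      (fun _ _ h => connSetoid_mono ends α hF h)
  let f : Quotient (connSetoid ends α F) → Option (Quotient (connSetoid ends α F')) :=
    fun c => if c = Quotient.mk'' x then none else some (g c)
  have hf : Function.Injective f := by
    intro c d hcd
    by_cases hc : c = Quotient.mk'' x <;> by_cases hd : d = Quotient.mk'' x
    · rw [hc, hd]
    · simp [f, hc, hd] at hcd
    · simp [f, hc, hd] at hcd
    · simp only [f, hc, hd, if_false, Option.some.injEq] at hcd
      induction c using Quotient.inductionOn' with
      | h a =>
      induction d using Quotient.inductionOn' with
      | h b =>
      have hab : (connSetoid ends α F').r a b := Quotient.eq''.1 hcd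
      rcases conn_insert ends α F F' e hF' x y hxy a b hab with h | ⟨h1, h2⟩
      · exact Quotient.eq''.2 h
      · have h1 := h1.resolve_left (fun h => hc (Quotient.eq''.2 h))
        have h2 := h2.resolve_left (fun h => hd (Quotient.eq''.2 h))
        exact Quotient.eq''.2 ((connSetoid ends α F).trans' h1 ((connSetoid ends α F).symm' h2))
  have := Nat.card_le_card_of_injective f hf
  rwa [Finite.card_option] at this

/-- Adding `e` to a configuration drops the number of components by `0` or `1`. -/
theorem numComponents_update [Finite V] (ends : E → Sym2 V) (α : Setoid V) (ω : E → Bool) (e : E) :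
    numComponents ends α ω = numComponents ends α (Function.update ω e true) ∨
    numComponents ends α ω = numComponents ends α (Function.update ω e true) + 1 := by
  have h1 : {e' | ω e' = true} ⊆ {e' | Function.update ω e true e' = true} := by
    intro e' he'
    by_cases h : e' = e
    · subst h; simp
    · simpa [Function.update_of_ne h] using he'
  have h2 : {e' | Function.update ω e true e' = true} ⊆ insert e {e' | ω e' = true} := by
    intro e' he'
    by_cases h : e' = e
    · exact Or.inl h
    · right; simpa [Function.update_of_ne h] using he'
  have a := card_mono ends α h1
  have b := card_insert ends α e h1 h2
  unfold numComponents
  omega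

theorem berWeight_update [Fintype E] (s : ℝ) (ω : E → Bool) (e : E) (he : ω e = false) :
    (1 - s) * berWeight (fun _ => s) (Function.update ω e true) =
      s * berWeight (fun _ => s) ω := by
  unfold berWeight
  rw [← Finset.mul_prod_erase _ _ (Finset.mem_univ e),
    ← Finset.mul_prod_erase Finset.univ (fun e => if ω e = true then s else 1 - s)
      (Finset.mem_univ e)]
  have : ∀ e' ∈ Finset.univ.erase e,
      (if Function.update ω e true e' = true then s else 1 - s)
        = (if ω e' = true then s else 1 - s) := by
    intro e' h
    rw [Function.update_of_ne (Finset.ne_of_mem_erase h)]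
  rw [Finset.prod_congr rfl this]
  simp [he]
  ring

theorem fkWeight_eq [Fintype E] (ends : E → Sym2 V) (α : Setoid V) (p q : ℝ) (ω : E → Bool) :
    fkWeight ends α p q ω = berWeight (fun _ => p) ω * q ^ numComponents ends α ω := by
  unfold fkWeight berWeight
  rw [Finset.prod_ite]
  simp

/-- Iterated one-edge bounds. -/
theorem iter_le [Fintype E] (f g : (E → Bool) → ℝ) (r : ℝ) (hr : 0 ≤ r)
    (hf0 : ∀ ω, 0 ≤ f ω) (hg0 : ∀ ω, 0 ≤ g ω)
    (hf : ∀ ω e, ω e = false → f (Function.update ω e true) ≤ r * f ω)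
    (hg : ∀ ω e, ω e = false → r * g ω ≤ g (Function.update ω e true))
    (D : Finset E) (c b : E → Bool) (hc : ∀ e ∈ D, c e = false) (hb : ∀ e ∈ D, b e = false) :
    f (fun e => if e ∈ D then true else c e) ≤ r ^ D.card * f c ∧
    r ^ D.card * g b ≤ g (fun e => if e ∈ D then true else b e) := by
  induction D using Finset.induction_on with
  | empty => simp
  | insert e D he ih =>
    obtain ⟨h1, h2⟩ := ih (fun e' h => hc e' (Finset.mem_insert_of_mem h))
      (fun e' h => hb e' (Finset.mem_insert_of_mem h))
    have key : ∀ c : E → Bool, (fun e' => if e' ∈ insert e D then true else c e') =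
        Function.update (fun e' => if e' ∈ D then true else c e') e true := by
      intro c
      funext e'
      by_cases h : e' = e
      · subst h; simp
      · simp [Function.update_of_ne h, h]
    rw [key c, key b, Finset.card_insert_of_notMem he, pow_succ']
    constructor
    · refine (hf _ e ?_).trans ?_
      · simp [he, hc e (Finset.mem_insert_self _ _)]
      · rw [mul_assoc]; exact mul_le_mul_of_nonneg_left h1 hr
    · refine le_trans ?_ (hg _ e ?_)
      · rw [mul_assoc]; exact mul_le_mul_of_nonneg_left h2 hr
      · simp [he, hb e (Finset.mem_insert_self _ _)]

theorem holley_cond [Fintype E] (f g : (E → Bool) → ℝ) (r : ℝ) (hr : 0 ≤ r)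
    (hf0 : ∀ ω, 0 ≤ f ω) (hg0 : ∀ ω, 0 ≤ g ω)
    (hf : ∀ ω e, ω e = false → f (Function.update ω e true) ≤ r * f ω)
    (hg : ∀ ω e, ω e = false → r * g ω ≤ g (Function.update ω e true))
    (a b : E → Bool) : f a * g b ≤ f (a ⊓ b) * g (a ⊔ b) := by
  let D : Finset E := Finset.univ.filter fun e => a e = true ∧ b e = false
  obtain ⟨h1, h2⟩ := iter_le f g r hr hf0 hg0 hf hg D (a ⊓ b) b
    (by intro e he; simp [D] at he; simp [he]) (by intro e he; simp [D] at he; simp [he])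
  have e1 : (fun e => if e ∈ D then true else (a ⊓ b) e) = a := by
    funext e
    cases ha : a e <;> cases hb : b e <;> simp [D, ha, hb]
  have e2 : (fun e => if e ∈ D then true else b e) = a ⊔ b := by
    funext e
    cases ha : a e <;> cases hb : b e <;> simp [D, ha, hb]
  rw [e1] at h1
  rw [e2] at h2
  calc f a * g b ≤ (r ^ D.card * f (a ⊓ b)) * g b := mul_le_mul_of_nonneg_right h1 (hg0 _)
    _ = f (a ⊓ b) * (r ^ D.card * g b) := by ring
    _ ≤ _ := mul_le_mul_of_nonneg_left h2 (hf0 _)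

theorem stochDom_of_ratio [Fintype E] (f g : (E → Bool) → ℝ) (r : ℝ) (hr : 0 ≤ r)
    (hf0 : ∀ ω, 0 < f ω) (hg0 : ∀ ω, 0 < g ω)
    (hf : ∀ ω e, ω e = false → f (Function.update ω e true) ≤ r * f ω)
    (hg : ∀ ω e, ω e = false → r * g ω ≤ g (Function.update ω e true)) :
    StochDom (probOf f) (probOf g) := by
  intro A hA
  have hF : 0 < ∑ x, f x := Finset.sum_pos (fun x _ => hf0 x) Finset.univ_nonempty
  have hG : 0 < ∑ x, g x := Finset.sum_pos (fun x _ => hg0 x) Finset.univ_nonempty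
  have H := holley (α := E → Bool) (β := ℝ) (f := fun a => f a / ∑ x, f x)
    (g := fun a => g a / ∑ x, g x) (μ := fun a => if a ∈ A then 1 else 0)
    (by intro a; dsimp only; split_ifs <;> simp)
    (by intro a; exact div_nonneg (hf0 a).le hF.le)
    (by intro a; exact div_nonneg (hg0 a).le hG.le)
    (by
      intro a b hab
      by_cases ha : a ∈ A
      · have hb : b ∈ A := hA ha hab
        simp [ha, hb]
      · simp only [ha, if_false]; split_ifs <;> simp)
    (by rw [← Finset.sum_div, ← Finset.sum_div, div_self hF.ne', div_self hG.ne'])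
    (by
      intro a b
      rw [div_mul_div_comm, div_mul_div_comm]
      exact div_le_div_of_nonneg_right
        (holley_cond f g r hr (fun x => (hf0 x).le) (fun x => (hg0 x).le) hf hg a b)
        (mul_pos hF hG).le)
  unfold probOf massOf
  simpa [Finset.sum_div, Finset.sum_filter, ite_div] using H

theorem berWeight_pos [Fintype E] (s : ℝ) (h0 : 0 < s) (h1 : s < 1) (ω : E → Bool) :
    0 < berWeight (fun _ => s) ω := by
  unfold berWeight
  refine Finset.prod_pos fun e _ => ?_
  split_ifs <;> linarith

/-- **Classical comparison inequalities**:
`P_{min(p,p')} ≼ φ^α_{G,p,q} ≼ P_{max(p,p')}`. -/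
theorem classical_comparison_inequalities
    {V E : Type*} [Fintype V] [Fintype E]
    (ends : E → Sym2 V) (α : Setoid V)
    (p q : ℝ) (hp : p ∈ Set.Ioo (0 : ℝ) 1) (hq : 0 < q) :
    StochDom (berProb fun _ : E => min p (pPrime p q)) (fkProb ends α p q) ∧
    StochDom (fkProb ends α p q) (berProb fun _ : E => max p (pPrime p q)) := by
  obtain ⟨hp0, hp1⟩ := hp
  have h1p : 0 < 1 - p := by linarith
  have hden : 0 < p + q * (1 - p) := by positivity
  have hp'0 : 0 < pPrime p q := div_pos hp0 hden
  have hp'1 : pPrime p q < 1 := by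
    unfold pPrime
    rw [div_lt_one hden]
    have := mul_pos hq h1p
    linarith
  have hp'eq : pPrime p q / (1 - pPrime p q) = p / (1 - p) / q := by
    have : 1 - pPrime p q = q * (1 - p) / (p + q * (1 - p)) := by
      unfold pPrime
      field_simp
      ring
    rw [this]
    unfold pPrime
    field_simp
  have hmono : ∀ s t : ℝ, s ≤ t → t < 1 → s / (1 - s) ≤ t / (1 - t) := by
    intro s t hst ht
    rw [div_le_div_iff₀ (by linarith) (by linarith)]
    nlinarith
  have hber : ∀ s : ℝ, s < 1 → ∀ (ω : E → Bool) (e : E), ω e = false →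
      berWeight (fun _ => s) (Function.update ω e true) =
        s / (1 - s) * berWeight (fun _ => s) ω := by
    intro s hs ω e he
    have h := berWeight_update s ω e he
    have : (1 - s) ≠ 0 := by linarith
    field_simp
    linarith
  have hfk0 : ∀ ω : E → Bool, 0 < fkWeight ends α p q ω := by
    intro ω
    rw [fkWeight_eq]
    exact mul_pos (berWeight_pos p hp0 hp1 ω) (pow_pos hq _)
  have hfk : ∀ (ω : E → Bool) (e : E), ω e = false →
      fkWeight ends α p q (Function.update ω e true) = p / (1 - p) * fkWeight ends α p q ω ∨
      fkWeight ends α p q (Function.update ω e true) =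
        pPrime p q / (1 - pPrime p q) * fkWeight ends α p q ω := by
    intro ω e he
    rw [fkWeight_eq, fkWeight_eq, hber p hp1 ω e he, hp'eq]
    rcases numComponents_update ends α ω e with h | h
    · left; rw [h]; ring
    · right; rw [h, pow_succ]; field_simp
  constructor
  · have hs1 : min p (pPrime p q) < 1 := (min_le_left _ _).trans_lt hp1
    have hs0 : 0 < min p (pPrime p q) := lt_min hp0 hp'0
    refine stochDom_of_ratio _ _ (min p (pPrime p q) / (1 - min p (pPrime p q)))
      (div_nonneg hs0.le (by linarith)) (berWeight_pos _ hs0 hs1) hfk0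
      (fun ω e he => (hber _ hs1 ω e he).le) ?_
    intro ω e he
    rcases hfk ω e he with h | h <;> rw [h] <;>
      refine mul_le_mul_of_nonneg_right ?_ (hfk0 ω).le
    · exact hmono _ _ (min_le_left _ _) hp1
    · exact hmono _ _ (min_le_right _ _) hp'1
  · have hs1 : max p (pPrime p q) < 1 := max_lt hp1 hp'1
    have hs0 : 0 < max p (pPrime p q) := lt_max_of_lt_left hp0
    refine stochDom_of_ratio _ _ (max p (pPrime p q) / (1 - max p (pPrime p q)))
      (div_nonneg hs0.le (by linarith)) hfk0 (berWeight_pos _ hs0 hs1) ?_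
      (fun ω e he => (hber _ hs1 ω e he).ge)
    intro ω e he
    rcases hfk ω e he with h | h <;> rw [h] <;>
      refine mul_le_mul_of_nonneg_right ?_ (hfk0 ω).le
    · exact hmono _ _ (le_max_left _ _) hs1
    · exact hmono _ _ (le_max_right _ _) hs1
end FKPaper
end
end

section
/- The FK measure is the unique stationary distribution of the Glauber dynamics. Let (V, E, ends, α) be a finite graph with boundary condition with E nonempty, p ∈ (0,1), q > 0. For e ∈ E let K_e be the heat-bath kernel that, from ω, leaves all edges other than e unchanged and sets e open with probability p if the two endpoints of e are connected in the multigraph on V/α with edge set {e' ≠ e : ω e' = true}, and with probability p' = p/(p+q(1−p)) otherwise. Let K := (1/|E|) ∑_{e∈E} K_e be the kernel that updates a uniformly random edge. Then every probability measure μ on configurations satisfying μK = μ equals φ^α_{G,p,q}. -/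
open scoped Classical

noncomputable section

namespace FKPaper

variable {V E : Type*}

/-- Probability that the heat-bath update at `e` opens the edge. -/
def heatBathRate [Fintype E] (ends : E → Sym2 V) (α : Setoid V) (p q : ℝ) (e : E)
    (ω : E → Bool) : ℝ :=
  if EndsConn ends α {e' | e' ≠ e ∧ ω e' = true} e then p else pPrime p q

/-- The heat-bath (Glauber) kernel at edge `e`. -/
def heatBath [Fintype E] (ends : E → Sym2 V) (α : Setoid V) (p q : ℝ) (e : E)
    (ω ω' : E → Bool) : ℝ :=
  if ∀ e' ≠ e, ω' e' = ω e' then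
    (if ω' e = true then heatBathRate ends α p q e ω
     else 1 - heatBathRate ends α p q e ω)
  else 0

/-- The random-scan Glauber kernel: update a uniformly chosen edge. -/
def glauber [Fintype E] (ends : E → Sym2 V) (α : Setoid V) (p q : ℝ)
    (ω ω' : E → Bool) : ℝ :=
  ((Fintype.card E : ℝ))⁻¹ * ∑ e : E, heatBath ends α p q e ω ω'

theorem connSetoid_insert_iff (ends : E → Sym2 V) (α : Setoid V) (F : Set E) (e : E)
    (x y : Quotient α) (he : Sym2.map (Quotient.mk α) (ends e) = s(x, y)) (a b : Quotient α) :
    Conn ends α (insert e F) a b ↔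
      Conn ends α F a b ∨ (Conn ends α F a x ∧ Conn ends α F y b) ∨
        (Conn ends α F a y ∧ Conn ends α F x b) := by
  have hr : ∀ a, Conn ends α F a a := fun a => Relation.EqvGen.refl a
  have hs : ∀ {a b}, Conn ends α F a b → Conn ends α F b a :=
    fun {a b} h => Relation.EqvGen.symm _ _ h
  have ht : ∀ {a b c}, Conn ends α F a b → Conn ends α F b c → Conn ends α F a c :=
    fun {a b c} h h' => Relation.EqvGen.trans _ _ _ h h'
  have hmono : ∀ {a b}, Conn ends α F a b → Conn ends α (insert e F) a b := by
    intro a b h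
    induction h with
    | rel a b h =>
      obtain ⟨e', he', h⟩ := h
      exact Relation.EqvGen.rel _ _ ⟨e', Set.mem_insert_of_mem _ he', h⟩
    | refl a => exact Relation.EqvGen.refl a
    | symm a b _ ih => exact Relation.EqvGen.symm _ _ ih
    | trans a b c _ _ ih1 ih2 => exact Relation.EqvGen.trans _ _ _ ih1 ih2
  have hxy : Conn ends α (insert e F) x y :=
    Relation.EqvGen.rel _ _ ⟨e, Set.mem_insert _ _, he⟩
  constructor
  · intro h
    induction h with
    | rel a b h =>
      obtain ⟨e', he', h⟩ := h
      rcases he' with rfl | he'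
      · rw [he, Sym2.eq_iff] at h
        rcases h with ⟨rfl, rfl⟩ | ⟨rfl, rfl⟩
        · exact Or.inr (Or.inl ⟨hr _, hr _⟩)
        · exact Or.inr (Or.inr ⟨hr _, hr _⟩)
      · exact Or.inl (Relation.EqvGen.rel _ _ ⟨e', he', h⟩)
    | refl a => exact Or.inl (hr a)
    | symm a b _ ih =>
      rcases ih with h | ⟨h, h'⟩ | ⟨h, h'⟩
      · exact Or.inl (hs h)
      · exact Or.inr (Or.inr ⟨hs h', hs h⟩)
      · exact Or.inr (Or.inl ⟨hs h', hs h⟩)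
    | trans a b c _ _ ih1 ih2 =>
      rcases ih1 with h | ⟨h, h'⟩ | ⟨h, h'⟩ <;> rcases ih2 with g | ⟨g, g'⟩ | ⟨g, g'⟩
      · exact Or.inl (ht h g)
      · exact Or.inr (Or.inl ⟨ht h g, g'⟩)
      · exact Or.inr (Or.inr ⟨ht h g, g'⟩)
      · exact Or.inr (Or.inl ⟨h, ht h' g⟩)
      · exact Or.inr (Or.inl ⟨h, g'⟩)
      · exact Or.inl (ht h g')
      · exact Or.inr (Or.inr ⟨h, ht h' g⟩)
      · exact Or.inl (ht h g')
      · exact Or.inr (Or.inr ⟨h, g'⟩)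
  · have hs' : ∀ {a b}, Conn ends α (insert e F) a b → Conn ends α (insert e F) b a :=
      fun {a b} h => Relation.EqvGen.symm _ _ h
    have ht' : ∀ {a b c}, Conn ends α (insert e F) a b → Conn ends α (insert e F) b c →
        Conn ends α (insert e F) a c :=
      fun {a b c} h h' => Relation.EqvGen.trans _ _ _ h h'
    rintro (h | ⟨h, h'⟩ | ⟨h, h'⟩)
    · exact hmono h
    · exact ht' (hmono h) (ht' hxy (hmono h'))
    · exact ht' (hmono h) (ht' (hs' hxy) (hmono h'))

theorem endsConn_iff (ends : E → Sym2 V) (α : Setoid V) (F : Set E) (e : E)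
    (x y : V) (he : ends e = s(x, y)) :
    EndsConn ends α F e ↔ Conn ends α F (Quotient.mk α x) (Quotient.mk α y) := by
  constructor
  · intro h
    exact h x y he
  · intro h x' y' he'
    rw [he, Sym2.eq_iff] at he'
    rcases he' with ⟨rfl, rfl⟩ | ⟨rfl, rfl⟩
    · exact h
    · exact Relation.EqvGen.symm _ _ h

theorem card_insert_of_conn (ends : E → Sym2 V) (α : Setoid V) (F : Set E) (e : E)
    (h : EndsConn ends α F e) :
    Nat.card (Quotient (connSetoid ends α (insert e F))) =
      Nat.card (Quotient (connSetoid ends α F)) := by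
  obtain ⟨x, y, he⟩ : ∃ x y, ends e = s(x, y) := by
    induction h' : ends e with | _ x y => exact ⟨x, y, rfl⟩
  have hc := h x y he
  have he' : Sym2.map (Quotient.mk α) (ends e) = s(Quotient.mk α x, Quotient.mk α y) := by
    rw [he]; rfl
  have : connSetoid ends α (insert e F) = connSetoid ends α F := by
    ext a b
    refine (connSetoid_insert_iff ends α F e _ _ he' a b).trans ?_
    constructor
    · rintro (h | ⟨h, h'⟩ | ⟨h, h'⟩)
      · exact h
      · exact Relation.EqvGen.trans _ _ _ h (Relation.EqvGen.trans _ _ _ hc h')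
      · exact Relation.EqvGen.trans _ _ _ h
          (Relation.EqvGen.trans _ _ _ (Relation.EqvGen.symm _ _ hc) h')
    · exact Or.inl
  rw [this]

theorem card_insert_of_not_conn [Finite V] (ends : E → Sym2 V) (α : Setoid V) (F : Set E) (e : E)
    (h : ¬ EndsConn ends α F e) :
    Nat.card (Quotient (connSetoid ends α F)) =
      Nat.card (Quotient (connSetoid ends α (insert e F))) + 1 := by
  obtain ⟨x₀, y₀, he₀⟩ : ∃ x y, ends e = s(x, y) := by
    induction h' : ends e with | _ x y => exact ⟨x, y, rfl⟩
  rw [endsConn_iff ends α F e x₀ y₀ he₀] at h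
  have he : Sym2.map (Quotient.mk α) (ends e) = s(Quotient.mk α x₀, Quotient.mk α y₀) := by
    rw [he₀]; rfl
  generalize Quotient.mk α x₀ = x at *
  generalize Quotient.mk α y₀ = y at *
  have key := connSetoid_insert_iff ends α F e x y he
  have hs : ∀ {a b}, Conn ends α F a b → Conn ends α F b a :=
    fun {a b} h => Relation.EqvGen.symm _ _ h
  have hr : ∀ a, Conn ends α F a a := fun a => Relation.EqvGen.refl a
  have ht : ∀ {a b c}, Conn ends α F a b → Conn ends α F b c → Conn ends α F a c :=
    fun {a b c} h h' => Relation.EqvGen.trans _ _ _ h h'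
  let S := connSetoid ends α F
  let T := connSetoid ends α (insert e F)
  let f : Quotient S → Quotient T :=
    Quotient.map' (s₁ := S) (s₂ := T) id (fun a b hab => (key a b).2 (Or.inl hab))
  let g : {c : Quotient S // c ≠ Quotient.mk S y} → Quotient T := fun c => f c.1
  have hg : Function.Bijective g := by
    constructor
    · rintro ⟨c, hc⟩ ⟨d, hd⟩ hcd
      induction c using Quotient.inductionOn with | _ a
      induction d using Quotient.inductionOn with | _ b
      have hc' : ¬ Conn ends α F a y := fun h => hc (Quotient.sound h)
      have hd' : ¬ Conn ends α F b y := fun h => hd (Quotient.sound h)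
      have hab : Conn ends α (insert e F) a b := Quotient.exact (s := T) hcd
      rcases (key a b).1 hab with h1 | ⟨h1, h2⟩ | ⟨h1, h2⟩
      · exact Subtype.ext (Quotient.sound h1)
      · exact absurd (hs h2) hd'
      · exact absurd h1 hc'
    · intro c
      induction c using Quotient.inductionOn with | _ a
      by_cases hay : Conn ends α F a y
      · refine ⟨⟨Quotient.mk S x, fun h' => h (Quotient.exact h')⟩, ?_⟩
        exact Quotient.sound (s := T) ((key x a).2 (Or.inr (Or.inl ⟨hr x, hs hay⟩)))
      · exact ⟨⟨Quotient.mk S a, fun h' => hay (Quotient.exact h')⟩, rfl⟩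
  have h1 : Nat.card {c : Quotient S // c ≠ Quotient.mk S y} = Nat.card (Quotient T) :=
    Nat.card_eq_of_bijective g hg
  have : Fintype (Quotient S) := Fintype.ofFinite _
  have h2 : Fintype.card {c : Quotient S // c ≠ Quotient.mk S y} = Fintype.card (Quotient S) - 1 := by
    simp [Fintype.card_subtype_compl]
  have h3 : 0 < Fintype.card (Quotient S) := Fintype.card_pos_iff.2 ⟨Quotient.mk S y⟩
  change Nat.card (Quotient S) = Nat.card (Quotient T) + 1
  rw [← h1, Nat.card_eq_fintype_card, Nat.card_eq_fintype_card, h2]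
  omega

theorem fkWeight_pos [Fintype E] (ends : E → Sym2 V) (α : Setoid V) (p q : ℝ)
    (hp : p ∈ Set.Ioo (0 : ℝ) 1) (hq : 0 < q) (ω : E → Bool) : 0 < fkWeight ends α p q ω := by
  have h0 := hp.1
  have h1 : 0 < 1 - p := by linarith [hp.2]
  unfold fkWeight
  positivity

theorem rate_pos [Fintype E] (ends : E → Sym2 V) (α : Setoid V) (p q : ℝ)
    (hp : p ∈ Set.Ioo (0 : ℝ) 1) (hq : 0 < q) (e : E) (ω : E → Bool) :
    0 < heatBathRate ends α p q e ω ∧ heatBathRate ends α p q e ω < 1 := by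
  have h0 := hp.1
  have h1 : 0 < 1 - p := by linarith [hp.2]
  unfold heatBathRate pPrime
  split_ifs
  · exact hp
  · refine ⟨by positivity, ?_⟩
    rw [div_lt_one (by positivity)]
    have : 0 < q * (1 - p) := by positivity
    linarith

theorem rate_update [Fintype E] (ends : E → Sym2 V) (α : Setoid V) (p q : ℝ) (e : E)
    (ω : E → Bool) (b : Bool) :
    heatBathRate ends α p q e (Function.update ω e b) = heatBathRate ends α p q e ω := by
  unfold heatBathRate
  have : {e' | e' ≠ e ∧ Function.update ω e b e' = true} = {e' | e' ≠ e ∧ ω e' = true} := by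
    ext e'
    by_cases h : e' = e <;> simp [h]
  rw [this]

theorem sum_heatBath [Fintype E] (ends : E → Sym2 V) (α : Setoid V) (p q : ℝ) (e : E)
    (ω : E → Bool) (f : (E → Bool) → ℝ) :
    ∑ ω', heatBath ends α p q e ω ω' * f ω' =
      heatBathRate ends α p q e ω * f (Function.update ω e true) +
        (1 - heatBathRate ends α p q e ω) * f (Function.update ω e false) := by
  have hne : Function.update ω e true ≠ Function.update ω e false := by
    intro h
    have := congrFun h e
    simp at this
  rw [← Finset.sum_subset (Finset.subset_univ {Function.update ω e true, Function.update ω e false}),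
    Finset.sum_pair hne]
  · have h1 : ∀ b, ∀ e' ≠ e, Function.update ω e b e' = ω e' := by
      intro b e' he'
      simp [he']
    simp only [heatBath]
    rw [if_pos (h1 true), if_pos (h1 false)]
    simp
  · intro ω' _ h
    unfold heatBath
    rw [if_neg, zero_mul]
    intro h'
    apply h
    have : ω' = Function.update ω e (ω' e) := by
      ext e'
      by_cases he : e' = e
      · subst he; simp
      · simp [he, h' e' he]
    rw [this]
    cases ω' e <;> simp

theorem weight_balance [Finite V] [Fintype E] (ends : E → Sym2 V) (α : Setoid V) (p q : ℝ)
    (hp : p ∈ Set.Ioo (0 : ℝ) 1) (hq : 0 < q) (e : E) (ω : E → Bool) :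
    fkWeight ends α p q (Function.update ω e true) * (1 - heatBathRate ends α p q e ω) =
      fkWeight ends α p q (Function.update ω e false) * heatBathRate ends α p q e ω := by
  have h0 := hp.1
  have h1 : 0 < 1 - p := by linarith [hp.2]
  set F : Set E := {e' | e' ≠ e ∧ ω e' = true} with hF
  have hs1 : {e' | Function.update ω e true e' = true} = insert e F := by
    ext e'
    by_cases h : e' = e <;> simp [h, hF]
  have hs0 : {e' | Function.update ω e false e' = true} = F := by
    ext e'
    by_cases h : e' = e <;> simp [h, hF]
  have ho : (Finset.univ.filter fun e' => Function.update ω e true e' = true).card =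
      (Finset.univ.filter fun e' => Function.update ω e false e' = true).card + 1 := by
    rw [← Finset.card_insert_of_notMem (a := e) (by simp)]
    congr 1
    ext e'
    by_cases h : e' = e <;> simp [h]
  have hc : (Finset.univ.filter fun e' => Function.update ω e false e' = false).card =
      (Finset.univ.filter fun e' => Function.update ω e true e' = false).card + 1 := by
    rw [← Finset.card_insert_of_notMem (a := e) (by simp)]
    congr 1
    ext e'
    by_cases h : e' = e <;> simp [h]
  unfold fkWeight numComponents heatBathRate
  rw [ho, hc, hs1, hs0]
  by_cases h : EndsConn ends α F e
  · rw [if_pos h, card_insert_of_conn ends α F e h]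
    ring
  · rw [if_neg h, card_insert_of_not_conn ends α F e h]
    have h2 : 1 - pPrime p q = q * (1 - p) / (p + q * (1 - p)) := by
      have : p + q * (1 - p) ≠ 0 := by positivity
      unfold pPrime
      field_simp
      ring
    rw [h2]
    unfold pPrime
    ring

theorem heatBath_balance [Finite V] [Fintype E] (ends : E → Sym2 V) (α : Setoid V) (p q : ℝ)
    (hp : p ∈ Set.Ioo (0 : ℝ) 1) (hq : 0 < q) (e : E) (ω ω' : E → Bool) :
    fkWeight ends α p q ω * heatBath ends α p q e ω ω' =
      fkWeight ends α p q ω' * heatBath ends α p q e ω' ω := by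
  by_cases h : ∀ e' ≠ e, ω' e' = ω e'
  · have hω' : ω' = Function.update ω e (ω' e) := by
      ext e'
      by_cases he : e' = e
      · subst he; simp
      · simp [he, h e' he]
    have hω : ω = Function.update ω e (ω e) := by simp
    have hr : heatBathRate ends α p q e ω' = heatBathRate ends α p q e ω := by
      rw [hω', rate_update]
    have hb := weight_balance ends α p q hp hq e ω
    unfold heatBath
    rw [if_pos h, if_pos (fun e' he' => (h e' he').symm), hr]
    generalize heatBathRate ends α p q e ω = r at hb ⊢
    cases h1 : ω e <;> cases h2 : ω' e <;> rw [h1] at hω <;> rw [h2] at hω'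
    · rw [hω'.trans hω.symm]
    · rw [← hω, ← hω'] at hb
      simpa using hb.symm
    · rw [← hω, ← hω'] at hb
      simpa using hb
    · rw [hω'.trans hω.symm]
  · unfold heatBath
    rw [if_neg h, if_neg (fun h' => h (fun e' he' => (h' e' he').symm))]
    simp

/-- **The FK measure is the unique stationary distribution of the Glauber dynamics.** -/
theorem fk_unique_stationary_glauber
    {V E : Type*} [Fintype V] [Fintype E] [Nonempty E]
    (ends : E → Sym2 V) (α : Setoid V)
    (p q : ℝ) (hp : p ∈ Set.Ioo (0 : ℝ) 1) (hq : 0 < q)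
    (μ : (E → Bool) → ℝ)
    (hnonneg : ∀ ω, 0 ≤ μ ω) (hsum : ∑ ω, μ ω = 1)
    (hstat : ∀ ω' : E → Bool, ∑ ω : E → Bool, μ ω * glauber ends α p q ω ω' = μ ω') :
    ∀ ω : E → Bool, μ ω = fkProb ends α p q {ω} := by
  have hw := fkWeight_pos ends α p q hp hq
  set w := fkWeight ends α p q with hwdef
  let f : (E → Bool) → ℝ := fun ω => μ ω / w ω
  have hf : ∀ ω, μ ω = w ω * f ω := fun ω => by
    have := (hw ω).ne'
    simp only [f]
    field_simp
  have hcard : (0 : ℝ) < Fintype.card E := by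
    exact_mod_cast Fintype.card_pos
  -- `f` is harmonic
  have hharm : ∀ ω, ∑ e : E, (heatBathRate ends α p q e ω * f (Function.update ω e true) +
      (1 - heatBathRate ends α p q e ω) * f (Function.update ω e false)) =
      Fintype.card E * f ω := by
    intro ω
    have h1 := hstat ω
    have h2 : ∀ ω', μ ω' * glauber ends α p q ω' ω =
        w ω * ((Fintype.card E : ℝ)⁻¹ * ∑ e, heatBath ends α p q e ω ω' * f ω') := by
      intro ω'
      rw [hf ω', glauber, ← Finset.sum_mul]
      have : w ω' * ∑ e, heatBath ends α p q e ω' ω = w ω * ∑ e, heatBath ends α p q e ω ω' := by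
        rw [Finset.mul_sum, Finset.mul_sum]
        exact Finset.sum_congr rfl fun e _ => heatBath_balance ends α p q hp hq e ω' ω
      linear_combination (f ω' * (Fintype.card E : ℝ)⁻¹) * this
    rw [Finset.sum_congr rfl (fun ω' _ => h2 ω'), ← Finset.mul_sum, ← Finset.mul_sum,
      Finset.sum_comm, hf ω] at h1
    have h3 := mul_left_cancel₀ (hw ω).ne' h1
    rw [Finset.sum_congr rfl (fun e _ => sum_heatBath ends α p q e ω f)] at h3
    rw [← h3]
    field_simp
  -- maximum principle
  obtain ⟨ω₀, hmax⟩ := Finite.exists_max f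
  have hstep : ∀ ω, f ω = f ω₀ → ∀ e b, f (Function.update ω e b) = f ω₀ := by
    intro ω hω
    have hr := fun e => rate_pos ends α p q hp hq e ω
    have hle : ∀ e ∈ (Finset.univ : Finset E),
        heatBathRate ends α p q e ω * f (Function.update ω e true) +
        (1 - heatBathRate ends α p q e ω) * f (Function.update ω e false) ≤ f ω₀ := by
      intro e _
      nlinarith [hr e, hmax (Function.update ω e true), hmax (Function.update ω e false),
        mul_le_mul_of_nonneg_left (hmax (Function.update ω e true)) (hr e).1.le,
        mul_le_mul_of_nonneg_left (hmax (Function.update ω e false))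
          (sub_nonneg.2 (hr e).2.le)]
    have heq := (Finset.sum_eq_sum_iff_of_le hle).1 (by
      rw [hharm ω, hω]; simp)
    intro e b
    have he := heq e (Finset.mem_univ e)
    obtain ⟨r0, r1⟩ := hr e
    have m1 := hmax (Function.update ω e true)
    have m0 := hmax (Function.update ω e false)
    have a1 := mul_nonneg r0.le (sub_nonneg.2 m1)
    have a0 := mul_nonneg (sub_nonneg.2 r1.le) (sub_nonneg.2 m0)
    cases b
    · have : (1 - heatBathRate ends α p q e ω) * (f ω₀ - f (Function.update ω e false)) = 0 := by
        linarith
      rcases mul_eq_zero.1 this with h | h <;> linarith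
    · have : heatBathRate ends α p q e ω * (f ω₀ - f (Function.update ω e true)) = 0 := by
        linarith
      rcases mul_eq_zero.1 this with h | h <;> linarith
  have hconst : ∀ ω, f ω = f ω₀ := by
    intro ω
    have : ∀ s : Finset E, f (fun e => if e ∈ s then ω e else ω₀ e) = f ω₀ := by
      intro s
      induction s using Finset.induction_on with
      | empty => simp
      | insert a s ha ih =>
        have := hstep _ ih a (ω a)
        rw [← this]
        congr 1
        ext e
        by_cases h : e = a
        · subst h; simp
        · simp [h]
    simpa using this Finset.univ
  have hμ : ∀ ω, μ ω = w ω * f ω₀ := fun ω => by rw [hf ω, hconst ω]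
  have htot : (∑ ω, w ω) * f ω₀ = 1 := by
    rw [Finset.sum_mul, ← hsum]
    exact Finset.sum_congr rfl fun ω _ => (hμ ω).symm
  intro ω
  have hpos : 0 < ∑ ω, w ω := Finset.sum_pos (fun ω _ => hw ω) Finset.univ_nonempty
  have h1 : massOf w {ω} = w ω := by
    simp [massOf, Finset.filter_eq']
  have h2 : massOf w Set.univ = ∑ ω, w ω := by
    simp [massOf]
  rw [fkProb, probOf, ← hwdef, h1, h2, hμ ω, eq_div_iff hpos.ne']
  linear_combination (w ω) * htot
end FKPaper
end
end
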